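/- arXiv:2407.10535 — 4 statements merged into one kernel-verified Lean document; each statement's English description precedes it below -/
import Mathlib

section
/- Let h : ℝ⁴ → ℝ be smooth, with variables written (u,v,x,y). Suppose that for all (u,v,x,y): ∂_u∂_u h = 0, ∂_u∂_x h = 0, ∂_u∂_y h = 0, and ∂_x∂_y h = 0. Then there exist smooth functions h₁ : ℝ → ℝ, H_X : ℝ² → ℝ and H_Y : ℝ² → ℝ such that h(u,v,x,y) = h₁(v)·u + H_X(v,x) + H_Y(v,y) for all (u,v,x,y). -/
/-!
A function with vanishing mixed second derivative splits as a sum of functions of one variable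
each, and a function with vanishing second derivative is affine. For fixed `v`, splitting off `u`
from `x`, then `u` from `y`, then `x` from `y` leaves only values of `h` on the coordinate axes.
All components, including the slope `h 1 v 0 0 - h 0 v 0 0` in `u`, are thus values of `h`
rather than of its derivatives, so no regularity in `v` is lost.
-/

open Function

theorem differentiable_deriv_of_contDiff_uncurry {𝕜 E F : Type*}
    [NontriviallyNormedField 𝕜] [NormedAddCommGroup E] [NormedSpace 𝕜 E]
    [NormedAddCommGroup F] [NormedSpace 𝕜 F] {f : E → 𝕜 → F}
    (hf : ContDiff 𝕜 2 (uncurry f)) (b : 𝕜) : Differentiable 𝕜 fun a => deriv (f a) b := by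
  have hfderiv : ContDiff 𝕜 1 fun a => fderiv 𝕜 (f a) b :=
    hf.fderiv contDiff_const (by norm_num)
  exact (hfderiv.differentiable one_ne_zero).clm_apply (differentiable_const 1)

section

variable {𝕜 E F : Type*} [RCLike 𝕜] [NormedAddCommGroup E] [NormedSpace 𝕜 E]
  [NormedAddCommGroup F] [NormedSpace 𝕜 F]

theorem sub_eq_sub_of_deriv_eq {f g : 𝕜 → F} (hf : Differentiable 𝕜 f) (hg : Differentiable 𝕜 g)
    (hfg : ∀ t, deriv f t = deriv g t) (a b : 𝕜) : f a - f b = g a - g b := by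
  obtain ⟨c, hc⟩ := isOpen_univ.exists_eq_add_of_deriv_eq isPreconnected_univ
    hf.differentiableOn hg.differentiableOn fun t _ => hfg t
  rw [hc (Set.mem_univ a), hc (Set.mem_univ b), add_sub_add_right_eq_sub]

theorem eq_smul_add_of_deriv_deriv_eq_zero {g : 𝕜 → F} (hg : Differentiable 𝕜 g)
    (hg' : Differentiable 𝕜 (deriv g)) (hg'' : ∀ t, deriv (deriv g) t = 0) (t : 𝕜) :
    g t = t • (g 1 - g 0) + g 0 := by
  have deriv_smul_right (c : F) (s : 𝕜) : deriv (fun r : 𝕜 => r • c) s = c := by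
    simpa only [one_smul] using ((hasDerivAt_id' s).smul_const c).deriv
  have deriv_eq_smul (s : 𝕜) : deriv g s = deriv (fun r : 𝕜 => r • deriv g 0) s :=
    (is_const_of_deriv_eq_zero hg' hg'' s 0).trans (deriv_smul_right _ s).symm
  have increment (s : 𝕜) : g s - g 0 = s • deriv g 0 := by
    simpa only [zero_smul, sub_zero] using
      sub_eq_sub_of_deriv_eq hg (by fun_prop) deriv_eq_smul s 0
  rw [increment 1, one_smul, ← increment t, sub_add_cancel]

theorem sub_eq_sub_of_mixed_deriv_eq_zero {f : 𝕜 → 𝕜 → F} (hf : ∀ a, Differentiable 𝕜 (f a))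
    (hf' : ∀ b, Differentiable 𝕜 fun a => deriv (f a) b)
    (hf'' : ∀ a b, deriv (fun t => deriv (f t) b) a = 0) (a a₀ b b₀ : 𝕜) :
    f a b - f a b₀ = f a₀ b - f a₀ b₀ :=
  sub_eq_sub_of_deriv_eq (hf a) (hf a₀)
    (fun s => is_const_of_deriv_eq_zero (hf' s) (fun t => hf'' t s) a a₀) b b₀

theorem sub_eq_sub_of_contDiff_of_mixed_deriv_eq_zero {f : 𝕜 → 𝕜 → F}
    (hf : ContDiff 𝕜 2 (uncurry f)) (hf'' : ∀ a b, deriv (fun t => deriv (f t) b) a = 0)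
    (a a₀ b b₀ : 𝕜) : f a b - f a b₀ = f a₀ b - f a₀ b₀ :=
  sub_eq_sub_of_mixed_deriv_eq_zero
    (fun a => (hf.comp (contDiff_prodMk_right a)).differentiable two_ne_zero)
    (differentiable_deriv_of_contDiff_uncurry hf) hf'' a a₀ b b₀

theorem eq_add_axes_of_second_derivs_eq_zero {k : 𝕜 → 𝕜 → 𝕜 → F}
    (hk : ContDiff 𝕜 2 fun p : 𝕜 × 𝕜 × 𝕜 => k p.1 p.2.1 p.2.2)
    (huu : ∀ u x y, deriv (fun t => deriv (fun s => k s x y) t) u = 0)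
    (hux : ∀ u x y, deriv (fun t => deriv (fun s => k t s y) x) u = 0)
    (huy : ∀ u x y, deriv (fun t => deriv (fun s => k t x s) y) u = 0)
    (hxy : ∀ u x y, deriv (fun t => deriv (fun s => k u t s) y) x = 0) (u x y : 𝕜) :
    k u x y = u • (k 1 0 0 - k 0 0 0) + k 0 x 0 + (k 0 0 y - k 0 0 0) := by
  have split_ux : k u x y - k u 0 y = k 0 x y - k 0 0 y :=
    sub_eq_sub_of_contDiff_of_mixed_deriv_eq_zero (f := fun t s => k t s y)
      (hk.comp (f := fun p : 𝕜 × 𝕜 => (p.1, p.2, y)) (by fun_prop)) (hux · · y) u 0 x 0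
  have split_uy : k u 0 y - k u 0 0 = k 0 0 y - k 0 0 0 :=
    sub_eq_sub_of_contDiff_of_mixed_deriv_eq_zero (f := fun t s => k t 0 s)
      (hk.comp (f := fun p : 𝕜 × 𝕜 => (p.1, 0, p.2)) (by fun_prop)) (huy · 0 ·) u 0 y 0
  have split_xy : k 0 x y - k 0 x 0 = k 0 0 y - k 0 0 0 :=
    sub_eq_sub_of_contDiff_of_mixed_deriv_eq_zero (f := fun t s => k 0 t s)
      (hk.comp (f := fun p : 𝕜 × 𝕜 => (0, p.1, p.2)) (by fun_prop)) (hxy 0) x 0 y 0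
  have axis_contDiff : ContDiff 𝕜 2 fun t => k t 0 0 :=
    hk.comp (f := fun t : 𝕜 => (t, 0, 0)) (by fun_prop)
  have affine_u : k u 0 0 = u • (k 1 0 0 - k 0 0 0) + k 0 0 0 :=
    eq_smul_add_of_deriv_deriv_eq_zero (g := fun t => k t 0 0)
      (axis_contDiff.differentiable two_ne_zero) axis_contDiff.differentiable_deriv_two
      (huu · 0 0) u
  calc
    k u x y = (k u x y - k u 0 y) + (k u 0 y - k u 0 0) + k u 0 0 := by abel
    _ = ((k 0 x y - k 0 x 0) + k 0 x 0 - k 0 0 y) + (k 0 0 y - k 0 0 0) +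
        (u • (k 1 0 0 - k 0 0 0) + k 0 0 0) := by
      rw [split_ux, split_uy, affine_u, sub_add_cancel]
    _ = u • (k 1 0 0 - k 0 0 0) + k 0 x 0 + (k 0 0 y - k 0 0 0) := by rw [split_xy]; abel

theorem stmt0_general {n : WithTop ℕ∞} (hn : 2 ≤ n) {h : 𝕜 → E → 𝕜 → 𝕜 → F}
    (hh : ContDiff 𝕜 n fun p : 𝕜 × E × 𝕜 × 𝕜 => h p.1 p.2.1 p.2.2.1 p.2.2.2)
    (huu : ∀ u v x y, deriv (fun t => deriv (fun s => h s v x y) t) u = 0)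
    (hux : ∀ u v x y, deriv (fun t => deriv (fun s => h t v s y) x) u = 0)
    (huy : ∀ u v x y, deriv (fun t => deriv (fun s => h t v x s) y) u = 0)
    (hxy : ∀ u v x y, deriv (fun t => deriv (fun s => h u v t s) y) x = 0) :
    ∃ (h₁ : E → F) (HX HY : E → 𝕜 → F),
      ContDiff 𝕜 n h₁ ∧ ContDiff 𝕜 n (uncurry HX) ∧ ContDiff 𝕜 n (uncurry HY) ∧
      ∀ u v x y, h u v x y = u • h₁ v + HX v x + HY v y := by
  have contDiff_u (u : 𝕜) : ContDiff 𝕜 n fun v => h u v 0 0 :=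
    hh.comp (f := fun v : E => (u, v, 0, 0)) (by fun_prop)
  have contDiff_x : ContDiff 𝕜 n fun p : E × 𝕜 => h 0 p.1 p.2 0 :=
    hh.comp (f := fun p : E × 𝕜 => (0, p.1, p.2, 0)) (by fun_prop)
  have contDiff_y : ContDiff 𝕜 n fun p : E × 𝕜 => h 0 p.1 0 p.2 :=
    hh.comp (f := fun p : E × 𝕜 => (0, p.1, 0, p.2)) (by fun_prop)
  have contDiff_slice (v : E) : ContDiff 𝕜 2 fun p : 𝕜 × 𝕜 × 𝕜 => h p.1 v p.2.1 p.2.2 :=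
    (hh.of_le hn).comp (f := fun p : 𝕜 × 𝕜 × 𝕜 => (p.1, v, p.2.1, p.2.2)) (by fun_prop)
  exact ⟨fun v => h 1 v 0 0 - h 0 v 0 0, fun v x => h 0 v x 0, fun v y => h 0 v 0 y - h 0 v 0 0,
    (contDiff_u 1).sub (contDiff_u 0), contDiff_x,
    contDiff_y.sub ((contDiff_u 0).comp contDiff_fst),
    fun u v x y => eq_add_axes_of_second_derivs_eq_zero (k := fun u x y => h u v x y)
      (contDiff_slice v) (huu · v · ·) (hux · v · ·) (huy · v · ·) (hxy · v · ·) u x y⟩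

end

/-- If a smooth function `h(u,v,x,y)` on `ℝ⁴` satisfies
`∂_u∂_u h = 0`, `∂_u∂_x h = 0`, `∂_u∂_y h = 0` and `∂_x∂_y h = 0` everywhere,
then `h(u,v,x,y) = h₁(v)·u + H_X(v,x) + H_Y(v,y)` for smooth `h₁, H_X, H_Y`. -/
theorem stmt0
    (h : ℝ → ℝ → ℝ → ℝ → ℝ)
    (hsmooth : ContDiff ℝ (⊤ : ℕ∞) (fun p : ℝ × ℝ × ℝ × ℝ => h p.1 p.2.1 p.2.2.1 p.2.2.2))
    (huu : ∀ u v x y : ℝ, deriv (fun t => deriv (fun s => h s v x y) t) u = 0)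
    (hux : ∀ u v x y : ℝ, deriv (fun t => deriv (fun s => h t v s y) x) u = 0)
    (huy : ∀ u v x y : ℝ, deriv (fun t => deriv (fun s => h t v x s) y) u = 0)
    (hxy : ∀ u v x y : ℝ, deriv (fun t => deriv (fun s => h u v t s) y) x = 0) :
    ∃ (h₁ : ℝ → ℝ) (HX HY : ℝ → ℝ → ℝ),
      ContDiff ℝ (⊤ : ℕ∞) h₁ ∧
      ContDiff ℝ (⊤ : ℕ∞) (Function.uncurry HX) ∧
      ContDiff ℝ (⊤ : ℕ∞) (Function.uncurry HY) ∧
      ∀ u v x y : ℝ, h u v x y = h₁ v * u + HX v x + HY v y := by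
  simpa only [smul_eq_mul, mul_comm] using
    stmt0_general (WithTop.coe_le_coe.2 le_top) hsmooth huu hux huy hxy
end

section
/- Let k > 0 and let c₁, c₂ ∈ ℝ with c₁ > |c₂|. Define h : ℝ → ℝ by h(v) = exp(−v)·(c₁·cosh((1/2)·exp(2v)·√k) + c₂·sinh((1/2)·exp(2v)·√k)). Then h(v) > 0 for all v ∈ ℝ, and h(v)·(1 + k·exp(4v)) − h''(v) = 0 for all v ∈ ℝ. -/
/-!
If `2 a' φ' + a φ'' = 0`, then the first-order term drops out of the second derivative of
`a · (y ∘ φ)`, leaving `a'' · (y ∘ φ) + a φ'² · (y'' ∘ φ)` (the Liouville transformation).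
The amplitude `a(v) = e^{-v}` and the phase `φ(v) = e^{2v} √k / 2` satisfy this relation, with
`a'' = a` and `φ'² = k e^{4v}`, so they turn every solution of `y'' = y` into a solution of
`h'' = (1 + k e^{4v}) h`. The given `h` comes from `y = c₁ cosh + c₂ sinh`, which is positive
because its coefficients `(c₁ ± c₂) / 2` in the basis `e^{±u}` are.
-/

section LiouvilleTransformation

variable {𝕜 E : Type*} [NontriviallyNormedField 𝕜] [NormedAddCommGroup E] [NormedSpace 𝕜 E]
  {a a' a'' φ φ' φ'' : 𝕜 → 𝕜} {y y' y'' : 𝕜 → E}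

theorem hasDerivAt_smul_comp {v da dφ : 𝕜} {dy : E} (ha : HasDerivAt a da v)
    (hφ : HasDerivAt φ dφ v) (hy : HasDerivAt y dy (φ v)) :
    HasDerivAt (fun v ↦ a v • y (φ v)) (da • y (φ v) + (a v * dφ) • dy) v := by
  refine (ha.smul (hy.scomp v hφ)).congr_deriv ?_
  simp only [Function.comp_apply]
  module

theorem deriv_deriv_smul_comp_of_liouville
    (ha : ∀ v, HasDerivAt a (a' v) v) (ha' : ∀ v, HasDerivAt a' (a'' v) v)
    (hφ : ∀ v, HasDerivAt φ (φ' v) v) (hφ' : ∀ v, HasDerivAt φ' (φ'' v) v)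
    (hy : ∀ u, HasDerivAt y (y' u) u) (hy' : ∀ u, HasDerivAt y' (y'' u) u)
    {v : 𝕜} (hliouville : 2 * a' v * φ' v + a v * φ'' v = 0) :
    deriv (deriv fun v ↦ a v • y (φ v)) v
      = a'' v • y (φ v) + (a v * φ' v ^ 2) • y'' (φ v) := by
  have first_deriv : (deriv fun v ↦ a v • y (φ v))
      = fun v ↦ a' v • y (φ v) + (a v * φ' v) • y' (φ v) :=
    funext fun v ↦ (hasDerivAt_smul_comp (ha v) (hφ v) (hy _)).deriv
  have second_deriv := (hasDerivAt_smul_comp (ha' v) (hφ v) (hy _)).add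
    (hasDerivAt_smul_comp ((ha v).fun_mul (hφ' v)) (hφ v) (hy' _))
  rw [first_deriv]
  calc deriv (fun v ↦ a' v • y (φ v) + (a v * φ' v) • y' (φ v)) v
    _ = a'' v • y (φ v) + (2 * a' v * φ' v + a v * φ'' v) • y' (φ v)
          + (a v * φ' v ^ 2) • y'' (φ v) := second_deriv.deriv.trans (by module)
    _ = a'' v • y (φ v) + (a v * φ' v ^ 2) • y'' (φ v) := by rw [hliouville, zero_smul, add_zero]

end LiouvilleTransformation

theorem hasDerivAt_exp_const_mul (c v : ℝ) :
    HasDerivAt (fun v ↦ Real.exp (c * v)) (c * Real.exp (c * v)) v := by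
  simpa [mul_comm] using ((hasDerivAt_id v).const_mul c).exp

theorem deriv_deriv_exp_neg_smul_comp_exp {E : Type*} [NormedAddCommGroup E] [NormedSpace ℝ E]
    {y y' y'' : ℝ → E} (hy : ∀ u, HasDerivAt y (y' u) u) (hy' : ∀ u, HasDerivAt y' (y'' u) u)
    (s v : ℝ) :
    deriv (deriv fun v ↦ Real.exp (-v) • y (1 / 2 * Real.exp (2 * v) * s)) v
      = Real.exp (-v) • (y (1 / 2 * Real.exp (2 * v) * s)
          + (s ^ 2 * Real.exp (4 * v)) • y'' (1 / 2 * Real.exp (2 * v) * s)) := by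
  have amplitude (v : ℝ) : HasDerivAt (fun v ↦ Real.exp (-v)) (-Real.exp (-v)) v := by
    simpa using hasDerivAt_exp_const_mul (-1) v
  have amplitude_deriv (v : ℝ) : HasDerivAt (fun v ↦ -Real.exp (-v)) (Real.exp (-v)) v := by
    simpa using (amplitude v).fun_neg
  have phase (v : ℝ) :
      HasDerivAt (fun v ↦ 1 / 2 * Real.exp (2 * v) * s) (Real.exp (2 * v) * s) v :=
    (((hasDerivAt_exp_const_mul 2 v).const_mul (1 / 2)).mul_const s).congr_deriv (by ring)
  have phase_deriv (v : ℝ) :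
      HasDerivAt (fun v ↦ Real.exp (2 * v) * s) (2 * Real.exp (2 * v) * s) v :=
    (hasDerivAt_exp_const_mul 2 v).mul_const s
  have exp_four_mul : Real.exp (4 * v) = Real.exp (2 * v) ^ 2 := by
    rw [← Real.exp_nat_mul]
    ring_nf
  rw [deriv_deriv_smul_comp_of_liouville amplitude amplitude_deriv phase phase_deriv hy hy'
    (by ring), exp_four_mul]
  module

theorem hasDerivAt_mul_cosh_add_mul_sinh (c₁ c₂ u : ℝ) :
    HasDerivAt (fun u ↦ c₁ * Real.cosh u + c₂ * Real.sinh u)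
      (c₂ * Real.cosh u + c₁ * Real.sinh u) u :=
  (((Real.hasDerivAt_cosh u).const_mul c₁).add
    ((Real.hasDerivAt_sinh u).const_mul c₂)).congr_deriv (add_comm _ _)

theorem mul_cosh_add_mul_sinh_pos {c₁ c₂ : ℝ} (hc : |c₂| < c₁) (u : ℝ) :
    0 < c₁ * Real.cosh u + c₂ * Real.sinh u := by
  have sum_pos : 0 < c₁ + c₂ := by linarith [neg_abs_le c₂]
  have diff_pos : 0 < c₁ - c₂ := sub_pos.mpr (lt_of_abs_lt hc)
  calc 0 < ((c₁ + c₂) * Real.exp u + (c₁ - c₂) * Real.exp (-u)) / 2 :=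
        half_pos (add_pos (mul_pos sum_pos (Real.exp_pos u)) (mul_pos diff_pos (Real.exp_pos (-u))))
    _ = c₁ * Real.cosh u + c₂ * Real.sinh u := by rw [Real.cosh_eq, Real.sinh_eq]; ring

/-- For `k > 0` and `c₁ > |c₂|`, the function
`h(v) = exp(−v)·(c₁·cosh((1/2)e^{2v}√k) + c₂·sinh((1/2)e^{2v}√k))` is everywhere
positive and satisfies `h(v)(1 + k·e^{4v}) − h''(v) = 0`. -/
theorem stmt9
    (k : ℝ) (hk : 0 < k) (c₁ c₂ : ℝ) (hc : c₁ > |c₂|)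
    (h : ℝ → ℝ)
    (hdef : ∀ v : ℝ, h v = Real.exp (-v) *
        (c₁ * Real.cosh ((1 / 2) * Real.exp (2 * v) * Real.sqrt k)
          + c₂ * Real.sinh ((1 / 2) * Real.exp (2 * v) * Real.sqrt k))) :
    ∀ v : ℝ, 0 < h v ∧ h v * (1 + k * Real.exp (4 * v)) - deriv (deriv h) v = 0 := by
  intro v
  constructor
  · rw [hdef]
    exact mul_pos (Real.exp_pos _) (mul_cosh_add_mul_sinh_pos hc _)
  · have second_deriv := deriv_deriv_exp_neg_smul_comp_exp
      (hasDerivAt_mul_cosh_add_mul_sinh c₁ c₂) (hasDerivAt_mul_cosh_add_mul_sinh c₂ c₁) (√k) v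
    simp only [smul_eq_mul, ← hdef, Real.sq_sqrt hk.le] at second_deriv
    rw [second_deriv, hdef]
    ring
end

section
/- Let k > 0 and let h : ℝ → ℝ be twice differentiable with h''(v) = (1 + k·exp(4v))·h(v) for all v ∈ ℝ. Then there exist constants c₁, c₂ ∈ ℝ such that h(v) = exp(−v)·(c₁·cosh((1/2)·√k·exp(2v)) + c₂·sinh((1/2)·√k·exp(2v))) for all v ∈ ℝ. -/
/-!
The Liouville substitution `f ↦ ρ · (f ∘ φ)` with `ρ² φ'` constant turns solutions of `f'' = q f`
into solutions of `h'' = (ρ'' / ρ + φ'² · (q ∘ φ)) h`, and multiplies Wronskians by `ρ² φ'`. For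
`ρ v = exp (-v)` and `φ v = √k / 2 · exp (2 v)` it carries `f'' = f` to `h'' = (1 + k exp (4 v)) h`,
so the images of `cosh` and `sinh` are solutions with Wronskian `√k ≠ 0`. Since Wronskians of
solutions are constant, Cramer's rule writes every solution in terms of these two.
-/

section SecondOrderLinear

variable {𝕜 : Type*} [RCLike 𝕜]

/-- `f` is a global solution of the second-order linear equation `f'' = q f` without first-order
term. Differentiability of `f` and `deriv f` is part of the notion, so that no value of `deriv` is a
junk value. -/
structure IsSchrodingerSolution (q f : 𝕜 → 𝕜) : Prop where
  differentiable : Differentiable 𝕜 f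
  hasDerivAt_deriv : ∀ x, HasDerivAt (deriv f) (q x * f x) x

/-- The Wronskian `f g' - f' g` of two functions, which detects linear independence of solutions.
The sign convention is that of `Polynomial.wronskian`. -/
noncomputable def wronskian (f g : 𝕜 → 𝕜) (x : 𝕜) : 𝕜 :=
  f x * deriv g x - deriv f x * g x

theorem isSchrodingerSolution_of_hasDerivAt {q f f' : 𝕜 → 𝕜} (hf : ∀ x, HasDerivAt f (f' x) x)
    (hf' : ∀ x, HasDerivAt f' (q x * f x) x) : IsSchrodingerSolution q f where
  differentiable x := (hf x).differentiableAt
  hasDerivAt_deriv := by rwa [deriv_eq hf]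

theorem mul_wronskian_eq (f g h : 𝕜 → 𝕜) (x : 𝕜) :
    h x * wronskian f g x = wronskian h g x * f x + wronskian f h x * g x := by
  simp only [wronskian]
  ring

namespace IsSchrodingerSolution

variable {q f g h : 𝕜 → 𝕜}

theorem hasDerivAt (hf : IsSchrodingerSolution q f) (x : 𝕜) : HasDerivAt f (deriv f x) x :=
  (hf.differentiable x).hasDerivAt

theorem hasDerivAt_wronskian (hf : IsSchrodingerSolution q f) (hg : IsSchrodingerSolution q g)
    (x : 𝕜) : HasDerivAt (wronskian f g) 0 x := by
  refine (((hf.hasDerivAt x).mul (hg.hasDerivAt_deriv x)).sub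
    ((hf.hasDerivAt_deriv x).mul (hg.hasDerivAt x))).congr_deriv ?_
  ring

theorem wronskian_eq (hf : IsSchrodingerSolution q f) (hg : IsSchrodingerSolution q g) (x y : 𝕜) :
    wronskian f g x = wronskian f g y :=
  is_const_of_deriv_eq_zero (fun z ↦ (hf.hasDerivAt_wronskian hg z).differentiableAt)
    (fun z ↦ (hf.hasDerivAt_wronskian hg z).deriv) x y

theorem exists_eq_add_of_wronskian_ne_zero (hf : IsSchrodingerSolution q f)
    (hg : IsSchrodingerSolution q g) (hh : IsSchrodingerSolution q h) {x₀ : 𝕜}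
    (hfg : wronskian f g x₀ ≠ 0) : ∃ c₁ c₂ : 𝕜, ∀ x, h x = c₁ * f x + c₂ * g x := by
  refine ⟨wronskian h g x₀ / wronskian f g x₀, wronskian f h x₀ / wronskian f g x₀, fun x ↦ ?_⟩
  have cramer := mul_wronskian_eq f g h x
  rw [hf.wronskian_eq hg x x₀, hh.wronskian_eq hg x x₀, hf.wronskian_eq hh x x₀] at cramer
  field_simp
  exact cramer

end IsSchrodingerSolution

section Liouville

variable {q r f g ρ φ : 𝕜 → 𝕜}

theorem hasDerivAt_mul_comp {x f' ρ' φ' : 𝕜} (hρ : HasDerivAt ρ ρ' x) (hf : HasDerivAt f f' (φ x))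
    (hφ : HasDerivAt φ φ' x) :
    HasDerivAt (fun y ↦ ρ y * f (φ y)) (ρ' * f (φ x) + ρ x * (f' * φ')) x :=
  hρ.mul (hf.comp x hφ)

-- `ρ` times the left side of `hρφ` is the derivative of `ρ² φ'`; `hρφ` cancels the `f'` term.
theorem IsSchrodingerSolution.mul_comp {φ' φ'' : 𝕜 → 𝕜}
    (hρ : IsSchrodingerSolution r ρ) (hf : IsSchrodingerSolution q f)
    (hφ : ∀ x, HasDerivAt φ (φ' x) x)
    (hφ' : ∀ x, HasDerivAt φ' (φ'' x) x) (hρφ : ∀ x, 2 * deriv ρ x * φ' x + ρ x * φ'' x = 0) :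
    IsSchrodingerSolution (fun x ↦ r x + φ' x ^ 2 * q (φ x)) (fun x ↦ ρ x * f (φ x)) := by
  refine isSchrodingerSolution_of_hasDerivAt
    (fun x ↦ hasDerivAt_mul_comp (hρ.hasDerivAt x) (hf.hasDerivAt _) (hφ x)) fun x ↦ ?_
  have hasDerivAt_left := hasDerivAt_mul_comp (hρ.hasDerivAt_deriv x) (hf.hasDerivAt (φ x)) (hφ x)
  have hasDerivAt_right := (hρ.hasDerivAt x).mul
    (((hf.hasDerivAt_deriv (φ x)).comp x (hφ x)).mul (hφ' x))
  refine (hasDerivAt_left.add hasDerivAt_right).congr_deriv ?_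
  simp only [Pi.mul_apply, Function.comp_apply]
  linear_combination deriv f (φ x) * hρφ x

theorem wronskian_mul_comp {x φ' : 𝕜} (hρ : DifferentiableAt 𝕜 ρ x)
    (hf : DifferentiableAt 𝕜 f (φ x)) (hg : DifferentiableAt 𝕜 g (φ x)) (hφ : HasDerivAt φ φ' x) :
    wronskian (fun y ↦ ρ y * f (φ y)) (fun y ↦ ρ y * g (φ y)) x =
      ρ x ^ 2 * φ' * wronskian f g (φ x) := by
  simp only [wronskian, (hasDerivAt_mul_comp hρ.hasDerivAt hf.hasDerivAt hφ).deriv,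
    (hasDerivAt_mul_comp hρ.hasDerivAt hg.hasDerivAt hφ).deriv]
  ring

end Liouville

end SecondOrderLinear

open Real

theorem isSchrodingerSolution_cosh : IsSchrodingerSolution (fun _ ↦ 1) cosh :=
  isSchrodingerSolution_of_hasDerivAt hasDerivAt_cosh fun x ↦ by
    simpa only [one_mul] using hasDerivAt_sinh x

theorem isSchrodingerSolution_sinh : IsSchrodingerSolution (fun _ ↦ 1) sinh :=
  isSchrodingerSolution_of_hasDerivAt hasDerivAt_sinh fun x ↦ by
    simpa only [one_mul] using hasDerivAt_cosh x

theorem wronskian_cosh_sinh (x : ℝ) : wronskian cosh sinh x = 1 := by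
  simp only [wronskian, Real.deriv_cosh, Real.deriv_sinh]
  linear_combination cosh_sq_sub_sinh_sq x

theorem hasDerivAt_exp_neg (x : ℝ) : HasDerivAt (fun v ↦ exp (-v)) (-exp (-x)) x := by
  simpa only [mul_neg_one] using (hasDerivAt_neg x).exp

theorem isSchrodingerSolution_exp_neg :
    IsSchrodingerSolution (fun _ ↦ 1) (fun v : ℝ ↦ exp (-v)) :=
  isSchrodingerSolution_of_hasDerivAt hasDerivAt_exp_neg fun x ↦ by
    simpa only [neg_neg, one_mul] using (hasDerivAt_exp_neg x).fun_neg

theorem hasDerivAt_const_mul_exp_two_mul (c x : ℝ) :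
    HasDerivAt (fun v ↦ c * exp (2 * v)) (2 * c * exp (2 * x)) x :=
  ((((hasDerivAt_id' x).const_mul 2).exp).const_mul c).congr_deriv (by ring)

theorem hasDerivAt_half_mul_exp_two_mul (s x : ℝ) :
    HasDerivAt (fun v ↦ 1 / 2 * s * exp (2 * v)) (s * exp (2 * x)) x :=
  (hasDerivAt_const_mul_exp_two_mul (1 / 2 * s) x).congr_deriv (by ring)

theorem IsSchrodingerSolution.exp_neg_mul_comp {f : ℝ → ℝ}
    (hf : IsSchrodingerSolution (fun _ ↦ 1) f) (s : ℝ) :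
    IsSchrodingerSolution (fun v ↦ 1 + s ^ 2 * exp (4 * v))
      (fun v ↦ exp (-v) * f (1 / 2 * s * exp (2 * v))) := by
  have exp_four (v : ℝ) : exp (4 * v) = exp (2 * v) ^ 2 := by
    rw [← exp_nat_mul]
    ring_nf
  have transformed := isSchrodingerSolution_exp_neg.mul_comp hf
    (hasDerivAt_half_mul_exp_two_mul s) (hasDerivAt_const_mul_exp_two_mul s) fun x ↦ by
      rw [(hasDerivAt_exp_neg x).deriv]
      ring
  simpa only [exp_four, mul_pow, mul_one] using transformed

theorem wronskian_exp_neg_mul_cosh_sinh (s x : ℝ) :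
    wronskian (fun v ↦ exp (-v) * cosh (1 / 2 * s * exp (2 * v)))
      (fun v ↦ exp (-v) * sinh (1 / 2 * s * exp (2 * v))) x = s := by
  rw [wronskian_mul_comp (hasDerivAt_exp_neg x).differentiableAt
    differentiable_cosh.differentiableAt differentiable_sinh.differentiableAt
    (hasDerivAt_half_mul_exp_two_mul s x), wronskian_cosh_sinh]
  have exp_cancel : exp (-x) ^ 2 * exp (2 * x) = 1 := by
    rw [← exp_nat_mul, ← exp_add, exp_eq_one_iff]
    push_cast
    ring
  linear_combination s * exp_cancel

/-- For `k > 0`, every twice differentiable solution of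
`h'' = (1 + k·e^{4v})·h` on `ℝ` has the form
`h(v) = exp(−v)·(c₁·cosh((1/2)√k e^{2v}) + c₂·sinh((1/2)√k e^{2v}))`. -/
theorem stmt10
    (k : ℝ) (hk : 0 < k) (h : ℝ → ℝ)
    (hdiff : Differentiable ℝ h) (hdiff' : Differentiable ℝ (deriv h))
    (hode : ∀ v : ℝ, deriv (deriv h) v = (1 + k * Real.exp (4 * v)) * h v) :
    ∃ c₁ c₂ : ℝ, ∀ v : ℝ,
      h v = Real.exp (-v) *
        (c₁ * Real.cosh ((1 / 2) * Real.sqrt k * Real.exp (2 * v))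
          + c₂ * Real.sinh ((1 / 2) * Real.sqrt k * Real.exp (2 * v))) := by
  have solution_h : IsSchrodingerSolution (fun v ↦ 1 + √k ^ 2 * exp (4 * v)) h :=
    ⟨hdiff, fun v ↦ by simpa only [sq_sqrt hk.le, hode v] using (hdiff' v).hasDerivAt⟩
  have wronskian_ne_zero := (wronskian_exp_neg_mul_cosh_sinh √k 0).trans_ne (sqrt_ne_zero'.2 hk)
  obtain ⟨c₁, c₂, h_eq⟩ :=
    (isSchrodingerSolution_cosh.exp_neg_mul_comp √k).exists_eq_add_of_wronskian_ne_zero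
      (isSchrodingerSolution_sinh.exp_neg_mul_comp √k) solution_h wronskian_ne_zero
  refine ⟨c₁, c₂, fun v ↦ ?_⟩
  rw [h_eq v]
  ring
end

section
/- Let A ∈ ℝ, let β : ℝ → ℝ, and let F : ℝ³ → ℝ be smooth, with variables written (v,x,y). Suppose that for all (v,x,y): A·∂_x∂_y F + 2·∂_x∂_x F + ∂_y∂_y F = 0, ∂_x∂_y F + A·(2·∂_y∂_y F + ∂_x∂_x F) = 0, and ∂_x∂_x F + ∂_y∂_y F = β(v). Then there exist smooth functions F_x, F_y, F_{xy}, L₁, L₂, L₀ : ℝ → ℝ such that F(v,x,y) = F_x(v)·x² + F_y(v)·y² + F_{xy}(v)·x·y + L₁(v)·x + L₂(v)·y + L₀(v) for all (v,x,y), and moreover F_{xy} = −2A·(2F_y + F_x), (2 − A²)·F_x + (1 − 2A²)·F_y = 0, and β = 2(F_x + F_y). -/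
/-!
The three equations form a pointwise linear system for `∂_x²F, ∂_x∂_yF, ∂_y²F` with determinant
`1 + A² ≠ 0`, so each second partial is a constant multiple of `β(v)`; in particular it is
independent of `(x, y)`. Integrating twice, `F(v, ·, ·)` is a quadratic polynomial. Its coefficients
are finite differences of values of `F(v, ·, ·)` at the points `(0,0), (±1,0), (0,±1), (1,1)`, which
makes them as regular in `v` as `F`.
-/

section Regularity

variable {𝕜 E V : Type*} [NontriviallyNormedField 𝕜] [NormedAddCommGroup E] [NormedSpace 𝕜 E]
  [NormedAddCommGroup V] [NormedSpace 𝕜 V] {m n : WithTop ℕ∞}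

theorem contDiff_deriv_snd {f : V → 𝕜 → E} (hf : ContDiff 𝕜 n (Function.uncurry f))
    (hmn : m + 1 ≤ n) (y : 𝕜) : ContDiff 𝕜 m (fun v => deriv (f v) y) :=
  hf.fderiv_apply contDiff_const contDiff_const hmn

theorem contDiff_coeffs_of_eq_quadratic [CharZero 𝕜] {F : V → 𝕜 → 𝕜 → E}
    {a b c l l' k : V → E} (hF : ∀ x y, ContDiff 𝕜 n (fun v => F v x y))
    (hquad : ∀ v x y, F v x y =
      x ^ 2 • a v + y ^ 2 • b v + (x * y) • c v + x • l v + y • l' v + k v) :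
    ContDiff 𝕜 n a ∧ ContDiff 𝕜 n b ∧ ContDiff 𝕜 n c ∧
      ContDiff 𝕜 n l ∧ ContDiff 𝕜 n l' ∧ ContDiff 𝕜 n k := by
  have ha : a = fun v => (2⁻¹ : 𝕜) • (F v 1 0 + F v (-1) 0 - (2 : 𝕜) • F v 0 0) := by
    funext v; simp only [hquad]; module
  have hb : b = fun v => (2⁻¹ : 𝕜) • (F v 0 1 + F v 0 (-1) - (2 : 𝕜) • F v 0 0) := by
    funext v; simp only [hquad]; module
  have hc : c = fun v => F v 1 1 - F v 1 0 - F v 0 1 + F v 0 0 := by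
    funext v; simp only [hquad]; module
  have hl : l = fun v => (2⁻¹ : 𝕜) • (F v 1 0 - F v (-1) 0) := by
    funext v; simp only [hquad]; module
  have hl' : l' = fun v => (2⁻¹ : 𝕜) • (F v 0 1 - F v 0 (-1)) := by
    funext v; simp only [hquad]; module
  have hk : k = fun v => F v 0 0 := by
    funext v; simp only [hquad]; module
  rw [ha, hb, hc, hl, hl', hk]
  refine ⟨?_, ?_, ?_, ?_, ?_, ?_⟩ <;> fun_prop

end Regularity

section Integration

variable {𝕜 E : Type*} [RCLike 𝕜] [NormedAddCommGroup E] [NormedSpace 𝕜 E]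

theorem eq_add_smul_of_deriv_eq_const {g : 𝕜 → E} {c : E} (hg : Differentiable 𝕜 g)
    (hderiv : ∀ x, deriv g x = c) (x : 𝕜) : g x = g 0 + x • c := by
  have hzero (t : 𝕜) : HasDerivAt (fun s => g s - s • c) 0 t := by
    simpa [hderiv t] using (hg t).hasDerivAt.fun_sub ((hasDerivAt_id t).smul_const c)
  have hconst := is_const_of_deriv_eq_zero (fun t => (hzero t).differentiableAt)
    (fun t => (hzero t).deriv) x 0
  simpa [sub_eq_iff_eq_add] using hconst

theorem eq_quadratic_of_deriv_deriv_eq_const {g : 𝕜 → E} {c : E} (hg : Differentiable 𝕜 g)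
    (hg' : Differentiable 𝕜 (deriv g)) (hderiv : ∀ x, deriv (deriv g) x = c) (x : 𝕜) :
    g x = g 0 + x • deriv g 0 + (x ^ 2 / 2) • c := by
  have hslope (t : 𝕜) : HasDerivAt (fun s => g s - (s ^ 2 / 2) • c) (deriv g 0) t := by
    have hsq : HasDerivAt (fun s : 𝕜 => s ^ 2 / 2) t t := by
      simpa using (hasDerivAt_pow 2 t).div_const 2
    refine ((hg t).hasDerivAt.fun_sub (hsq.smul_const c)).congr_deriv ?_
    rw [eq_add_smul_of_deriv_eq_const hg' hderiv t, add_sub_cancel_right]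
  have haffine := eq_add_smul_of_deriv_eq_const (fun t => (hslope t).differentiableAt)
    (fun t => (hslope t).deriv) x
  simpa [sub_eq_iff_eq_add] using haffine

theorem eq_quadratic_of_second_partials_eq_const {f : 𝕜 → 𝕜 → E} {a b c : E}
    (hf : ContDiff 𝕜 2 (Function.uncurry f))
    (hxx : ∀ x, deriv (deriv (fun s => f s 0)) x = a)
    (hyy : ∀ x y, deriv (deriv (f x)) y = b)
    (hxy : ∀ x, deriv (fun s => deriv (f s) 0) x = c) (x y : 𝕜) :
    f x y = (x ^ 2 / 2) • a + (y ^ 2 / 2) • b + (x * y) • c +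
      x • deriv (fun s => f s 0) 0 + y • deriv (f 0) 0 + f 0 0 := by
  have hrow : ContDiff 𝕜 2 (fun s => f s 0) := hf.comp (contDiff_id.prodMk contDiff_const)
  have hcol : ContDiff 𝕜 2 (f x) := hf.comp (contDiff_const.prodMk contDiff_id)
  have hdy : ContDiff 𝕜 1 (fun s => deriv (f s) 0) :=
    contDiff_deriv_snd hf (by norm_num) 0
  rw [eq_quadratic_of_deriv_deriv_eq_const (hcol.differentiable two_ne_zero)
      hcol.differentiable_deriv_two (hyy x) y,
    eq_quadratic_of_deriv_deriv_eq_const (hrow.differentiable two_ne_zero)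
      hrow.differentiable_deriv_two hxx x,
    eq_add_smul_of_deriv_eq_const (hdy.differentiable one_ne_zero) hxy x]
  module

end Integration

theorem second_partials_eq_mul_laplacian {K : Type*} [Field K] {A fxx fxy fyy b : K}
    (hA : 1 + A ^ 2 ≠ 0) (h₁ : A * fxy + 2 * fxx + fyy = 0) (h₂ : fxy + A * (2 * fyy + fxx) = 0)
    (hb : fxx + fyy = b) :
    fxx = (2 * A ^ 2 - 1) / (1 + A ^ 2) * b ∧ fyy = (2 - A ^ 2) / (1 + A ^ 2) * b ∧
      fxy = -3 * A / (1 + A ^ 2) * b := by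
  refine ⟨?_, ?_, ?_⟩ <;> field_simp
  · linear_combination h₁ - A * h₂ - (1 - 2 * A ^ 2) * hb
  · linear_combination -h₁ + A * h₂ + (2 - A ^ 2) * hb
  · linear_combination A * h₁ + h₂ - 3 * A * hb

theorem stmt13_general {𝕜 V : Type*} [RCLike 𝕜] [NormedAddCommGroup V] [NormedSpace 𝕜 V]
    {n : WithTop ℕ∞} {A : 𝕜} (hA : 1 + A ^ 2 ≠ 0) {β : V → 𝕜} {F : V → 𝕜 → 𝕜 → 𝕜}
    (hF : ∀ v, ContDiff 𝕜 2 (Function.uncurry (F v)))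
    (hFn : ∀ x y, ContDiff 𝕜 n (fun v => F v x y))
    (heq1 : ∀ v x y,
      A * deriv (fun t => deriv (fun s => F v t s) y) x
        + 2 * deriv (fun t => deriv (fun s => F v s y) t) x
        + deriv (fun t => deriv (fun s => F v x s) t) y = 0)
    (heq2 : ∀ v x y,
      deriv (fun t => deriv (fun s => F v t s) y) x
        + A * (2 * deriv (fun t => deriv (fun s => F v x s) t) y
          + deriv (fun t => deriv (fun s => F v s y) t) x) = 0)
    (hbeta : ∀ v x y,
      deriv (fun t => deriv (fun s => F v s y) t) x
        + deriv (fun t => deriv (fun s => F v x s) t) y = β v) :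
    ∃ (Fx Fy Fxy L₁ L₂ L₀ : V → 𝕜),
      ContDiff 𝕜 n Fx ∧ ContDiff 𝕜 n Fy ∧ ContDiff 𝕜 n Fxy ∧
      ContDiff 𝕜 n L₁ ∧ ContDiff 𝕜 n L₂ ∧ ContDiff 𝕜 n L₀ ∧
      (∀ v x y, F v x y =
        Fx v * x ^ 2 + Fy v * y ^ 2 + Fxy v * x * y + L₁ v * x + L₂ v * y + L₀ v) ∧
      (∀ v, Fxy v = -2 * A * (2 * Fy v + Fx v)) ∧
      (∀ v, (2 - A ^ 2) * Fx v + (1 - 2 * A ^ 2) * Fy v = 0) ∧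
      (∀ v, β v = 2 * (Fx v + Fy v)) := by
  have hpartials (v : V) (x y : 𝕜) := second_partials_eq_mul_laplacian hA (heq1 v x y) (heq2 v x y)
    (hbeta v x y)
  have hquad (v : V) := eq_quadratic_of_second_partials_eq_const (hF v)
    (fun x => (hpartials v x 0).1) (fun x y => (hpartials v x y).2.1)
    (fun x => (hpartials v x 0).2.2)
  let Fx (v : V) := (2 * A ^ 2 - 1) / (1 + A ^ 2) * β v / 2
  let Fy (v : V) := (2 - A ^ 2) / (1 + A ^ 2) * β v / 2
  let Fxy (v : V) := -3 * A / (1 + A ^ 2) * β v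
  let L₁ (v : V) := deriv (fun s => F v s 0) 0
  let L₂ (v : V) := deriv (F v 0) 0
  let L₀ (v : V) := F v 0 0
  have hcoeff : ∀ v x y, F v x y =
      x ^ 2 • Fx v + y ^ 2 • Fy v + (x * y) • Fxy v + x • L₁ v + y • L₂ v + L₀ v := by
    intro v x y
    simp only [hquad v x y, smul_eq_mul, Fx, Fy, Fxy, L₁, L₂, L₀]
    ring
  obtain ⟨hFx, hFy, hFxy, hL₁, hL₂, hL₀⟩ := contDiff_coeffs_of_eq_quadratic hFn hcoeff
  refine ⟨Fx, Fy, Fxy, L₁, L₂, L₀, hFx, hFy, hFxy, hL₁, hL₂, hL₀, fun v x y => ?_,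
    fun v => ?_, fun v => ?_, fun v => ?_⟩
  · simp only [hcoeff v x y, smul_eq_mul]
    ring
  all_goals simp only [Fx, Fy, Fxy]; field_simp; ring

/-- If a smooth `F(v,x,y)` satisfies `A·∂_x∂_y F + 2∂_x²F + ∂_y²F = 0`,
`∂_x∂_y F + A(2∂_y²F + ∂_x²F) = 0` and `∂_x²F + ∂_y²F = β(v)`, then `F` is a quadratic
polynomial in `(x,y)` with `v`-dependent smooth coefficients satisfying
`F_{xy} = −2A(2F_y + F_x)`, `(2 − A²)F_x + (1 − 2A²)F_y = 0` and `β = 2(F_x + F_y)`. -/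
theorem stmt13
    (A : ℝ) (β : ℝ → ℝ) (F : ℝ → ℝ → ℝ → ℝ)
    (hsmooth : ContDiff ℝ (⊤ : ℕ∞) (fun p : ℝ × ℝ × ℝ => F p.1 p.2.1 p.2.2))
    (heq1 : ∀ v x y : ℝ,
      A * deriv (fun t => deriv (fun s => F v t s) y) x
        + 2 * deriv (fun t => deriv (fun s => F v s y) t) x
        + deriv (fun t => deriv (fun s => F v x s) t) y = 0)
    (heq2 : ∀ v x y : ℝ,
      deriv (fun t => deriv (fun s => F v t s) y) x
        + A * (2 * deriv (fun t => deriv (fun s => F v x s) t) y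
          + deriv (fun t => deriv (fun s => F v s y) t) x) = 0)
    (hbeta : ∀ v x y : ℝ,
      deriv (fun t => deriv (fun s => F v s y) t) x
        + deriv (fun t => deriv (fun s => F v x s) t) y = β v) :
    ∃ (Fx Fy Fxy L₁ L₂ L₀ : ℝ → ℝ),
      ContDiff ℝ (⊤ : ℕ∞) Fx ∧ ContDiff ℝ (⊤ : ℕ∞) Fy ∧ ContDiff ℝ (⊤ : ℕ∞) Fxy ∧
      ContDiff ℝ (⊤ : ℕ∞) L₁ ∧ ContDiff ℝ (⊤ : ℕ∞) L₂ ∧ ContDiff ℝ (⊤ : ℕ∞) L₀ ∧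
      (∀ v x y : ℝ, F v x y =
        Fx v * x ^ 2 + Fy v * y ^ 2 + Fxy v * x * y + L₁ v * x + L₂ v * y + L₀ v) ∧
      (∀ v : ℝ, Fxy v = -2 * A * (2 * Fy v + Fx v)) ∧
      (∀ v : ℝ, (2 - A ^ 2) * Fx v + (1 - 2 * A ^ 2) * Fy v = 0) ∧
      (∀ v : ℝ, β v = 2 * (Fx v + Fy v)) :=
  stmt13_general (by positivity)
    (fun v => contDiff_infty.1 (hsmooth.comp (contDiff_prodMk_right v)) 2)
    (fun x y => hsmooth.comp (contDiff_prodMk_left (x, y))) heq1 heq2 hbeta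
end
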